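/- arXiv:1802.09836 — 3 statements merged into one kernel-verified Lean document; each statement's English description precedes it below -/
import Mathlib

section
/- Let n ≥ 2 and let g, g' ∈ SL_n(ℂ). If conjugation by gg* and by g'g'* agree on all traceless matrices, i.e. (gg*)X(gg*)⁻¹ = (g'g'*)X(g'g'*)⁻¹ for every X ∈ M_n(ℂ) with tr(X) = 0, then gg* = g'g'*. (This is the injectivity of the adjoint representation Ad restricted to the Cartan model c(SL_n(ℂ)/SU(n)) = {gg* : g ∈ SL_n(ℂ)}.) -/
open Matrix
open scoped ComplexOrder

lemma cartan_aux_posDef {n : ℕ} (g : Matrix (Fin n) (Fin n) ℂ) (hg : g.det = 1) :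
    (g * gᴴ).PosDef := by
  have hu : IsUnit g := by
    rw [Matrix.isUnit_iff_isUnit_det, hg]; exact isUnit_one
  exact Matrix.PosDef.mul_conjTranspose_self g (Matrix.vecMul_injective_of_isUnit hu)

/-- Injectivity of the adjoint representation restricted to the Cartan model
`{g gᴴ : g ∈ SL_n(ℂ)}`: if conjugation by `g * gᴴ` and by `g' * g'ᴴ` agree on all
traceless matrices, then `g * gᴴ = g' * g'ᴴ`. -/
theorem cartan_model_Ad_injective (n : ℕ) (hn : 2 ≤ n)
    (g g' : Matrix (Fin n) (Fin n) ℂ) (hg : g.det = 1) (hg' : g'.det = 1)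
    (h : ∀ X : Matrix (Fin n) (Fin n) ℂ, X.trace = 0 →
      (g * gᴴ) * X * (g * gᴴ)⁻¹ = (g' * g'ᴴ) * X * (g' * g'ᴴ)⁻¹) :
    g * gᴴ = g' * g'ᴴ := by
  have hA := cartan_aux_posDef g hg
  have hB := cartan_aux_posDef g' hg'
  have dA : (g * gᴴ).det = 1 := by simp [Matrix.det_conjTranspose, hg]
  have dB : (g' * g'ᴴ).det = 1 := by simp [Matrix.det_conjTranspose, hg']
  generalize g * gᴴ = A at *
  generalize g' * g'ᴴ = B at *
  have uA : IsUnit A.det := by rw [dA]; exact isUnit_one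
  have uB : IsUnit B.det := by rw [dB]; exact isUnit_one
  have hM : B⁻¹ * A ∈ Set.range (Matrix.scalar (Fin n)) := by
    apply Matrix.mem_range_scalar_of_commute_single
    intro i j hij
    have h1 := h (Matrix.single i j 1) (Matrix.trace_single_eq_of_ne i j 1 hij)
    generalize Matrix.single i j (1 : ℂ) = X at *
    have h2 : B⁻¹ * (A * X * A⁻¹) * A = B⁻¹ * (B * X * B⁻¹) * A := by rw [h1]
    have h3 : B⁻¹ * (A * X * A⁻¹) * A = B⁻¹ * A * X := by
      simp only [Matrix.mul_assoc, Matrix.nonsing_inv_mul A uA, Matrix.mul_one]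
    have h4 : B⁻¹ * (B * X * B⁻¹) * A = X * (B⁻¹ * A) := by
      simp only [← Matrix.mul_assoc, Matrix.nonsing_inv_mul B uB, Matrix.one_mul]
    change X * (B⁻¹ * A) = B⁻¹ * A * X
    rw [← h3, ← h4, h2]
  obtain ⟨c, hc⟩ := hM
  have hAB : A = c • B := by
    have : B * (B⁻¹ * A) = A := by
      rw [← Matrix.mul_assoc, Matrix.mul_nonsing_inv B uB, Matrix.one_mul]
    rw [← this, ← hc, Matrix.scalar_apply, ← Matrix.smul_one_eq_diagonal]
    simp
  have hcn : c ^ n = 1 := by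
    have := dA
    rw [hAB, Matrix.det_smul, dB] at this
    simpa using this
  have a0 := hA.diag_pos (i := ⟨0, by omega⟩)
  have b0 := hB.diag_pos (i := ⟨0, by omega⟩)
  rw [hAB, Matrix.smul_apply, smul_eq_mul] at a0
  obtain ⟨hb, hb'⟩ := Complex.pos_iff.1 b0
  obtain ⟨ha, ha'⟩ := Complex.pos_iff.1 a0
  rw [Complex.mul_re, ← hb'] at ha
  rw [Complex.mul_im, ← hb'] at ha'
  have him : c.im = 0 := by
    have : c.im * (B ⟨0, by omega⟩ ⟨0, by omega⟩).re = 0 := by linarith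
    exact (mul_eq_zero.1 this).resolve_right hb.ne'
  have hre : 0 < c.re := by
    refine pos_of_mul_pos_left (b := (B ⟨0, by omega⟩ ⟨0, by omega⟩).re) ?_ hb.le
    linarith
  have hcr : c = (c.re : ℂ) := Complex.ext rfl (by simpa using him)
  have hr : c.re ^ n = 1 := by
    rw [hcr] at hcn
    exact_mod_cast hcn
  have h1 : c.re = 1 := (pow_eq_one_iff_of_nonneg hre.le (by omega)).1 hr
  rw [hAB, hcr, h1]
  simp
end

section
/- Let Cl_n be the Clifford algebra of the quadratic form Q(v) = −‖v‖² on Euclidean ℝⁿ, with canonical map ι and standard orthonormal basis (e₁, …, e_n). For skew-symmetric linear maps u, v : ℝⁿ → ℝⁿ set underline(u) := ¼ Σ_j ι(e_j)·ι(u(e_j)) and underline(v) := ¼ Σ_j ι(e_j)·ι(v(e_j)). Then the commutator [underline(u), underline(v)] = underline(u)·underline(v) − underline(v)·underline(u) represents the skew-symmetric operator u∘v − v∘u: for every ξ ∈ ℝⁿ, [[underline(u), underline(v)], ι(ξ)] = ι((u∘v − v∘u)(ξ)); equivalently, [underline(u), underline(v)] = ¼ Σ_j ι(e_j)·ι((u∘v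 − v∘u)(e_j)). -/
/-- The quadratic form `Q(v) = −‖v‖²` on Euclidean `ℝⁿ`. -/
noncomputable def Qneg (n : ℕ) : QuadraticForm ℝ (Fin n → ℝ) :=
  QuadraticMap.weightedSumSquares ℝ (fun _ : Fin n => (-1 : ℝ))

/-- The bivector `underline(u) = ¼ Σ_j ι(e_j)·ι(u(e_j))` representing a skew-symmetric
operator `u` in the Clifford algebra of `Q(v) = −‖v‖²`. -/
noncomputable def bivectorOf {n : ℕ} (u : (Fin n → ℝ) →ₗ[ℝ] (Fin n → ℝ)) :
    CliffordAlgebra (Qneg n) :=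
  (1 / 4 : ℝ) • ∑ j, CliffordAlgebra.ι (Qneg n) (Pi.single j 1) *
    CliffordAlgebra.ι (Qneg n) (u (Pi.single j 1))

open CliffordAlgebra in
theorem aux_anti {n : ℕ} (a b : Fin n → ℝ) :
    ι (Qneg n) a * ι (Qneg n) b + ι (Qneg n) b * ι (Qneg n) a =
      algebraMap ℝ _ (-2 * ∑ i, a i * b i) := by
  rw [ι_mul_ι_add_swap]
  congr 1
  simp only [QuadraticMap.polar, Qneg, QuadraticMap.weightedSumSquares_apply, Pi.add_apply,
    smul_eq_mul, Finset.mul_sum, ← Finset.sum_sub_distrib]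
  exact Finset.sum_congr rfl fun i _ => by ring

theorem aux_expand {n : ℕ} {M : Type*} [AddCommGroup M] [Module ℝ M]
    (f : (Fin n → ℝ) →ₗ[ℝ] M) (x : Fin n → ℝ) :
    f x = ∑ i, x i • f (Pi.single i 1) :=
  by
  classical
  conv_lhs => rw [pi_eq_sum_univ' x]
  rw [map_sum]
  exact Finset.sum_congr rfl fun _ _ => map_smul _ _ _

theorem aux_comm {R : Type*} [Ring R] (a b x : R) :
    a * b * x - x * (a * b) = a * (b * x + x * b) - (a * x + x * a) * b := by
  noncomm_ring

open CliffordAlgebra in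
theorem aux_key {n : ℕ} (u : (Fin n → ℝ) →ₗ[ℝ] (Fin n → ℝ))
    (hu : ∀ x y : Fin n → ℝ, ∑ i, u x i * y i = -∑ i, x i * u y i) (x : Fin n → ℝ) :
    bivectorOf u * ι (Qneg n) x - ι (Qneg n) x * bivectorOf u = ι (Qneg n) (u x) := by
  have h : ∀ j : Fin n, ι (Qneg n) (Pi.single j 1) * ι (Qneg n) (u (Pi.single j 1)) * ι (Qneg n) x
      - ι (Qneg n) x * (ι (Qneg n) (Pi.single j 1) * ι (Qneg n) (u (Pi.single j 1)))
      = (2 * u x j) • ι (Qneg n) (Pi.single j 1)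
        + (2 * x j) • ι (Qneg n) (u (Pi.single j 1)) := by
    intro j
    rw [aux_comm, aux_anti, aux_anti, hu, ← Algebra.commutes, ← Algebra.smul_def,
      ← Algebra.smul_def]
    simp only [Pi.single_apply, ite_mul, one_mul, zero_mul, Finset.sum_ite_eq', Finset.mem_univ,
      if_true]
    module
  have e1 := aux_expand (ι (Qneg n)) (u x)
  have e2 := aux_expand (ι (Qneg n) ∘ₗ u) x
  simp only [LinearMap.comp_apply] at e2
  rw [bivectorOf, smul_mul_assoc, mul_smul_comm, ← smul_sub, Finset.sum_mul, Finset.mul_sum,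
    ← Finset.sum_sub_distrib, Finset.sum_congr rfl fun j _ => h j, Finset.sum_add_distrib]
  simp only [mul_smul, ← Finset.smul_sum]
  rw [← e1, ← e2]
  module

open CliffordAlgebra in
theorem aux_tensor {n : ℕ} (u w : (Fin n → ℝ) →ₗ[ℝ] (Fin n → ℝ))
    (hu : ∀ x y : Fin n → ℝ, ∑ i, u x i * y i = -∑ i, x i * u y i) :
    ∑ j, ι (Qneg n) (u (Pi.single j 1)) * ι (Qneg n) (w (Pi.single j 1)) =
      -∑ j, ι (Qneg n) (Pi.single j 1) * ι (Qneg n) (w (u (Pi.single j 1))) := by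
  have hs : ∀ i j : Fin n, u (Pi.single j 1) i = - u (Pi.single i 1) j := by
    intro i j
    have := hu (Pi.single j 1) (Pi.single i 1)
    simpa [Pi.single_apply] using this
  have e1 : ∀ j : Fin n, ι (Qneg n) (u (Pi.single j 1)) =
      ∑ i, u (Pi.single j 1) i • ι (Qneg n) (Pi.single i 1) := fun j => aux_expand _ _
  have e2 : ∀ j : Fin n, ι (Qneg n) (w (u (Pi.single j 1))) =
      ∑ i, u (Pi.single j 1) i • ι (Qneg n) (w (Pi.single i 1)) :=
    fun j => aux_expand (ι (Qneg n) ∘ₗ w) _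
  simp_rw [e1, e2, Finset.sum_mul, Finset.mul_sum]
  rw [Finset.sum_comm, ← Finset.sum_neg_distrib]
  refine Finset.sum_congr rfl fun i _ => ?_
  rw [← Finset.sum_neg_distrib]
  refine Finset.sum_congr rfl fun j _ => ?_
  rw [hs i j, smul_mul_assoc, mul_smul_comm, neg_smul]

theorem aux_leib {R : Type*} [Ring R] (U a b : R) :
    U * (a * b) - (a * b) * U = (U * a - a * U) * b + a * (U * b - b * U) := by
  noncomm_ring

theorem aux_jac {R : Type*} [Ring R] (U V x : R) :
    (U * V - V * U) * x - x * (U * V - V * U) =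
      (U * (V * x - x * V) - (V * x - x * V) * U)
        - (V * (U * x - x * U) - (U * x - x * U) * V) := by
  noncomm_ring

/-- For skew-symmetric operators `u, v` on Euclidean `ℝⁿ`, the commutator
`[underline(u), underline(v)]` represents `u∘v − v∘u`: for every `ξ`,
`[[underline(u), underline(v)], ι(ξ)] = ι((u∘v − v∘u)(ξ))`; equivalently,
`[underline(u), underline(v)] = underline(u∘v − v∘u)`. -/
theorem bivector_commutator_represents (n : ℕ)
    (u v : (Fin n → ℝ) →ₗ[ℝ] (Fin n → ℝ))
    (hu : ∀ x y : Fin n → ℝ, ∑ i, u x i * y i = -∑ i, x i * u y i)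
    (hv : ∀ x y : Fin n → ℝ, ∑ i, v x i * y i = -∑ i, x i * v y i) :
    (∀ ξ : Fin n → ℝ,
      (bivectorOf u * bivectorOf v - bivectorOf v * bivectorOf u) *
          CliffordAlgebra.ι (Qneg n) ξ -
        CliffordAlgebra.ι (Qneg n) ξ *
          (bivectorOf u * bivectorOf v - bivectorOf v * bivectorOf u) =
      CliffordAlgebra.ι (Qneg n) ((u ∘ₗ v - v ∘ₗ u) ξ)) ∧
    bivectorOf u * bivectorOf v - bivectorOf v * bivectorOf u =
      bivectorOf (u ∘ₗ v - v ∘ₗ u) := by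
  constructor
  · intro ξ
    rw [aux_jac, aux_key v hv, aux_key u hu, aux_key u hu, aux_key v hv]
    simp
  · conv_lhs => rw [bivectorOf.eq_def v]
    rw [mul_smul_comm, smul_mul_assoc, ← smul_sub, Finset.sum_mul, Finset.mul_sum,
      ← Finset.sum_sub_distrib]
    simp_rw [aux_leib, aux_key u hu]
    rw [Finset.sum_add_distrib, aux_tensor u v hu, bivectorOf]
    congr 1
    simp only [LinearMap.sub_apply, LinearMap.comp_apply, map_sub, mul_sub,
      Finset.sum_sub_distrib]
    abel
end

section
/- Let Cl be the Clifford algebra of the quadratic form Q(v) = −‖v‖² on the Euclidean space ℝᵖ × ℝ^q (with the product inner product), with canonical map ι; let (e₁, …, e_p) and (f₁, …, f_q) be the standard orthonormal bases of the two factors. Let u : ℝᵖ → ℝ^q be linear with adjoint u* : ℝ^q → ℝᵖ (⟨u(x), y⟩ = ⟨x, u*(y)⟩). Set underline(u) := ½ Σ_{j=1}^p ι(e_j, 0)·ι(0, u(e_j)) ∈ Cl. Then for every ξ = (ξ_p, ξ_q) ∈ ℝᵖ × ℝ^q, the commutator satisfies underline(u)·ι(ξ) − ι(ξ)·underline(u)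 = ι(−u*(ξ_q), u(ξ_p)); i.e. underline(u) represents the skew-symmetric operator with block form (0, −u*; u, 0). -/
/-- The quadratic form `Q(v) = −‖v‖²` on the Euclidean space `ℝᵖ × ℝ^q`
(product inner product). -/
noncomputable def QnegProd (p q : ℕ) : QuadraticForm ℝ ((Fin p → ℝ) × (Fin q → ℝ)) :=
  (QuadraticMap.weightedSumSquares ℝ (fun _ : Fin p => (-1 : ℝ))).prod
    (QuadraticMap.weightedSumSquares ℝ (fun _ : Fin q => (-1 : ℝ)))

theorem QnegProd_anticomm (p q : ℕ) (a b : (Fin p → ℝ) × (Fin q → ℝ)) :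
    CliffordAlgebra.ι (QnegProd p q) a * CliffordAlgebra.ι (QnegProd p q) b =
      (-2 * (∑ i, a.1 i * b.1 i + ∑ i, a.2 i * b.2 i)) • (1 : CliffordAlgebra (QnegProd p q)) -
      CliffordAlgebra.ι (QnegProd p q) b * CliffordAlgebra.ι (QnegProd p q) a := by
  rw [eq_sub_iff_add_eq, CliffordAlgebra.ι_mul_ι_add_swap, Algebra.algebraMap_eq_smul_one]
  congr 1
  simp only [QuadraticMap.polar, QnegProd, QuadraticMap.prod_apply,
    QuadraticMap.weightedSumSquares_apply, Prod.fst_add, Prod.snd_add, Pi.add_apply, smul_eq_mul,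
    Finset.mul_sum, mul_add]
  have key : ∀ (n : ℕ) (x y : Fin n → ℝ), ∑ i, -1 * ((x i + y i) * (x i + y i)) =
      ∑ i, -1 * (x i * x i) + ∑ i, -1 * (y i * y i) + ∑ i, -2 * (x i * y i) := by
    intro n x y
    rw [← Finset.sum_add_distrib, ← Finset.sum_add_distrib]
    exact Finset.sum_congr rfl fun i _ => by ring
  have h1 := key p a.1 b.1
  have h2 := key q a.2 b.2
  simp only [mul_add] at h1 h2
  linarith

/-- For a linear map `u : ℝᵖ → ℝ^q` with adjoint `u*`, the element
`underline(u) = ½ Σ_j ι(e_j, 0)·ι(0, u(e_j))` of the Clifford algebra of `Q(v) = −‖v‖²`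
on `ℝᵖ × ℝ^q` represents the skew-symmetric operator `(ξ_p, ξ_q) ↦ (−u*(ξ_q), u(ξ_p))`:
`[underline(u), ι(ξ)] = ι(−u*(ξ_q), u(ξ_p))`. -/
theorem bivector_represents_block_skew (p q : ℕ)
    (u : (Fin p → ℝ) →ₗ[ℝ] (Fin q → ℝ)) (ustar : (Fin q → ℝ) →ₗ[ℝ] (Fin p → ℝ))
    (hadj : ∀ (x : Fin p → ℝ) (y : Fin q → ℝ), ∑ i, u x i * y i = ∑ j, x j * ustar y j)
    (ξ : (Fin p → ℝ) × (Fin q → ℝ)) :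
    ((1 / 2 : ℝ) • ∑ j, CliffordAlgebra.ι (QnegProd p q) (Pi.single j 1, 0) *
        CliffordAlgebra.ι (QnegProd p q) (0, u (Pi.single j 1))) *
        CliffordAlgebra.ι (QnegProd p q) ξ -
      CliffordAlgebra.ι (QnegProd p q) ξ *
        ((1 / 2 : ℝ) • ∑ j, CliffordAlgebra.ι (QnegProd p q) (Pi.single j 1, 0) *
          CliffordAlgebra.ι (QnegProd p q) (0, u (Pi.single j 1))) =
    CliffordAlgebra.ι (QnegProd p q) (-(ustar ξ.2), u ξ.1) := by
  set I := CliffordAlgebra.ι (QnegProd p q) with hI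
  have hterm : ∀ j : Fin p,
      I (Pi.single j 1, 0) * I (0, u (Pi.single j 1)) * I ξ -
        I ξ * (I (Pi.single j 1, 0) * I (0, u (Pi.single j 1))) =
      (2 : ℝ) • I ((-(ustar ξ.2 j)) • (Pi.single j 1, 0) + ξ.1 j • (0, u (Pi.single j 1))) := by
    intro j
    have h1 := QnegProd_anticomm p q (0, u (Pi.single j 1)) ξ
    have h2 := QnegProd_anticomm p q ξ (Pi.single j 1, 0)
    have h3 := hadj (Pi.single j 1) ξ.2
    have hs : ∀ y : Fin p → ℝ, ∑ i, (Pi.single j 1 : Fin p → ℝ) i * y i = y j := by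
      intro y
      simp [Pi.single_apply]
    have hs' : ∀ y : Fin p → ℝ, ∑ i, y i * (Pi.single j 1 : Fin p → ℝ) i = y j := by
      intro y
      simp [Pi.single_apply]
    simp only [← hI, h3, hs, hs', Pi.zero_apply, zero_mul, mul_zero, Finset.sum_const_zero,
      zero_add, add_zero] at h1 h2
    rw [mul_assoc, h1, ← mul_assoc, h2]
    simp only [map_add, map_smul, mul_sub, sub_mul, mul_assoc, neg_mul, mul_neg, mul_smul_comm,
      smul_mul_assoc, mul_one, one_mul]
    module
  rw [smul_mul_assoc, mul_smul_comm, ← smul_sub, Finset.sum_mul, Finset.mul_sum,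
    ← Finset.sum_sub_distrib, Finset.sum_congr rfl fun j _ => hterm j, ← Finset.smul_sum, smul_smul,
    ← map_sum]
  have hx : ∀ (x : Fin p → ℝ), ∑ j, x j • (Pi.single j 1 : Fin p → ℝ) = x := by
    intro x
    exact (pi_eq_sum_univ' x).symm
  have hfin : ∑ j, ((-(ustar ξ.2 j)) • ((Pi.single j 1, 0) : (Fin p → ℝ) × (Fin q → ℝ)) +
      ξ.1 j • (0, u (Pi.single j 1))) = (-(ustar ξ.2), u ξ.1) := by
    refine Prod.ext ?_ ?_
    · rw [Prod.fst_sum]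
      simp only [Prod.fst_add, Prod.smul_fst, smul_zero, add_zero]
      exact hx (-(ustar ξ.2))
    · rw [Prod.snd_sum]
      simp only [Prod.snd_add, Prod.smul_snd, smul_zero, zero_add, ← map_smul, ← map_sum, hx]
  rw [hfin]
  norm_num
end
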